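/- Let X be a measurable space, let D be a probability measure on X × {−1, 1}, let H : X → ℝ be a bounded measurable function, and let h* : X → {−1, 1} be a measurable binary classifier. Define sign(u) = 1 if u ≥ 0 and sign(u) = −1 if u < 0. Then Φ′_D(H, sign∘H) − Φ′_D(H, h*) ≥ corr_D(h*) − corr_D(sign∘H), where Φ′_D(H, h) = E_{(x,y)∼D}[φ′(y·H(x))·y·h(x)] and corr_D(h) = E_{(x,y)∼D}[y·h(x)]. -/

import Mathlib

open MeasureTheory

/-- The potential function φ(z) = 2 − z for z ≤ 0 and φ(z) = (z + 2)·exp(−z) for z > 0. -/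
noncomputable def phi (z : ℝ) : ℝ := if z ≤ 0 then 2 - z else (z + 2) * Real.exp (-z)

/-- The derivative: φ′(z) = −1 for z ≤ 0 and φ′(z) = −(z + 1)·exp(−z) for z > 0. -/
noncomputable def phi' (z : ℝ) : ℝ := if z ≤ 0 then -1 else -(z + 1) * Real.exp (-z)

/-- The sign function with the convention sign(u) = 1 for u ≥ 0 and sign(u) = −1 for u < 0. -/
noncomputable def sgn (u : ℝ) : ℝ := if 0 ≤ u then 1 else -1

/-! Adding `corr_D(h)` to `Φ′_D(H, h)` gives the expectation of `(1 + φ′(y·H(x)))·y·h(x)`, so the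
claim says that `h = sign ∘ H` maximizes this expectation among all `h` with `|h| ≤ 1`. It does so
pointwise: the weight `1 + φ′(y·H(x))` is nonnegative and vanishes where `sign ∘ H` may disagree
with the label, and elsewhere `y·sign(H(x)) = |y|` is the largest value that `y·h(x)` can take. -/

theorem phi'_of_nonpos {z : ℝ} (hz : z ≤ 0) : phi' z = -1 :=
  if_pos hz

theorem phi'_of_pos {z : ℝ} (hz : 0 < z) : phi' z = -(z + 1) * Real.exp (-z) :=
  if_neg hz.not_ge

theorem neg_one_le_phi' (z : ℝ) : -1 ≤ phi' z := by
  rcases le_or_gt z 0 with hz | hz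
  · exact (phi'_of_nonpos hz).ge
  · have h : (z + 1) * Real.exp (-z) ≤ 1 := by
      rw [Real.exp_neg, ← div_eq_mul_inv, div_le_one (Real.exp_pos z)]
      exact Real.add_one_le_exp z
    rw [phi'_of_pos hz, neg_mul]
    exact neg_le_neg h

theorem phi'_nonpos (z : ℝ) : phi' z ≤ 0 := by
  rcases le_or_gt z 0 with hz | hz
  · rw [phi'_of_nonpos hz]
    exact neg_one_lt_zero.le
  · rw [phi'_of_pos hz, neg_mul, neg_nonpos]
    positivity

theorem abs_phi'_le_one (z : ℝ) : |phi' z| ≤ 1 :=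
  abs_le.2 ⟨neg_one_le_phi' z, (phi'_nonpos z).trans zero_le_one⟩

theorem measurable_phi' : Measurable phi' :=
  Measurable.ite measurableSet_Iic (by fun_prop) (by fun_prop)

theorem measurable_sgn : Measurable sgn :=
  Measurable.ite measurableSet_Ici measurable_const measurable_const

theorem abs_sgn (u : ℝ) : |sgn u| = 1 := by
  unfold sgn
  split_ifs <;> simp

theorem mul_sgn_of_mul_pos {y u : ℝ} (h : 0 < y * u) : y * sgn u = |y| := by
  rcases pos_and_pos_or_neg_and_neg_of_mul_pos h with ⟨hy, hu⟩ | ⟨hy, hu⟩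
  · rw [sgn, if_pos hu.le, abs_of_pos hy, mul_one]
  · rw [sgn, if_neg hu.not_ge, abs_of_neg hy, mul_neg_one]

theorem one_add_phi'_mul_le_mul_sgn (y u : ℝ) {s : ℝ} (hs : |s| ≤ 1) :
    (1 + phi' (y * u)) * (y * s) ≤ (1 + phi' (y * u)) * (y * sgn u) := by
  rcases le_or_gt (y * u) 0 with h | h
  · simp [phi'_of_nonpos h]
  · have hys : y * s ≤ y * sgn u := calc
      y * s ≤ |y| * |s| := (le_abs_self _).trans_eq (abs_mul y s)
      _ ≤ |y| := mul_le_of_le_one_right (abs_nonneg y) hs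
      _ = y * sgn u := (mul_sgn_of_mul_pos h).symm
    exact mul_le_mul_of_nonneg_left hys (neg_le_iff_add_nonneg'.1 (neg_one_le_phi' _))

theorem integrable_of_ae_eq_one_or_neg_one {Ω : Type*} [MeasurableSpace Ω] {μ : Measure Ω}
    [IsFiniteMeasure μ] {f : Ω → ℝ} (hf : AEStronglyMeasurable f μ)
    (h : ∀ᵐ ω ∂μ, f ω = 1 ∨ f ω = -1) : Integrable f μ :=
  .of_bound hf 1 <| h.mono fun _ hω => ((abs_eq zero_le_one).2 hω).le

section

variable {X : Type*} [MeasurableSpace X] {D : Measure (X × ℝ)} {H h : X → ℝ}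

/-- The correlation `corr_D(h) = E[y·h(x)]` of a classifier `h` with the labels. The labels are the
second coordinate and may be arbitrary reals, and `D` may be any measure. -/
noncomputable def corr (D : Measure (X × ℝ)) (h : X → ℝ) : ℝ :=
  ∫ p, p.2 * h p.1 ∂D

/-- The quantity `Φ′_D(H, h) = E[φ′(y·H(x))·y·h(x)]`, the derivative at `H` in the direction `h` of
the expected potential `E[φ(y·H(x))]`. -/
noncomputable def potentialDeriv (D : Measure (X × ℝ)) (H h : X → ℝ) : ℝ :=
  ∫ p, phi' (p.2 * H p.1) * p.2 * h p.1 ∂D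

theorem integrable_label_mul {C : ℝ} (hlab : Integrable Prod.snd D) (hmeas : Measurable h)
    (hbd : ∀ x, |h x| ≤ C) : Integrable (fun p : X × ℝ => p.2 * h p.1) D :=
  hlab.mul_bdd (c := C) (hmeas.comp measurable_fst).aestronglyMeasurable
    (.of_forall fun p => hbd p.1)

theorem integrable_phi'_mul {f : X × ℝ → ℝ} (hf : Integrable f D) (hH : Measurable H) :
    Integrable (fun p => phi' (p.2 * H p.1) * f p) D :=
  hf.bdd_mul (c := 1) (measurable_phi'.comp (by fun_prop)).aestronglyMeasurable
    (.of_forall fun _ => abs_phi'_le_one _)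

theorem integrable_one_add_phi'_mul {f : X × ℝ → ℝ} (hf : Integrable f D) (hH : Measurable H) :
    Integrable (fun p => (1 + phi' (p.2 * H p.1)) * f p) D := by
  simp only [one_add_mul]
  exact hf.add (integrable_phi'_mul hf hH)

theorem corr_add_potentialDeriv {C : ℝ} (hlab : Integrable Prod.snd D) (hH : Measurable H)
    (hmeas : Measurable h) (hbd : ∀ x, |h x| ≤ C) :
    corr D h + potentialDeriv D H h =
      ∫ p, (1 + phi' (p.2 * H p.1)) * (p.2 * h p.1) ∂D := by
  have hint := integrable_label_mul hlab hmeas hbd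
  simp only [corr, potentialDeriv, one_add_mul, mul_assoc]
  exact (integral_add hint (integrable_phi'_mul hint hH)).symm

theorem conservation_lemma_general (hlab : Integrable Prod.snd D) (hH : Measurable H)
    (hmeas : Measurable h) (hbd : ∀ x, |h x| ≤ 1) :
    potentialDeriv D H (sgn ∘ H) - potentialDeriv D H h ≥ corr D h - corr D (sgn ∘ H) := by
  have hsgn : Measurable (sgn ∘ H) := measurable_sgn.comp hH
  have hsgn_bd : ∀ x, |(sgn ∘ H) x| ≤ 1 := fun x => (abs_sgn (H x)).le
  have hmax : corr D h + potentialDeriv D H h ≤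
      corr D (sgn ∘ H) + potentialDeriv D H (sgn ∘ H) := by
    rw [corr_add_potentialDeriv hlab hH hmeas hbd, corr_add_potentialDeriv hlab hH hsgn hsgn_bd]
    exact integral_mono
      (integrable_one_add_phi'_mul (integrable_label_mul hlab hmeas hbd) hH)
      (integrable_one_add_phi'_mul (integrable_label_mul hlab hsgn hsgn_bd) hH)
      fun p => one_add_phi'_mul_le_mul_sgn p.2 (H p.1) (hbd p.1)
  linarith

end

/-- Conservation-type lemma:
Φ′_D(H, sign∘H) − Φ′_D(H, h*) ≥ corr_D(h*) − corr_D(sign∘H). -/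
theorem conservation_lemma {X : Type*} [MeasurableSpace X]
    (D : Measure (X × ℝ)) [IsProbabilityMeasure D]
    (hlab : ∀ᵐ p ∂D, p.2 = 1 ∨ p.2 = -1)
    (H : X → ℝ) (hHmeas : Measurable H) (hHbd : ∃ C : ℝ, ∀ x, |H x| ≤ C)
    (hstar : X → ℝ) (hstarmeas : Measurable hstar)
    (hstarbin : ∀ x, hstar x = 1 ∨ hstar x = -1) :
    (∫ p, phi' (p.2 * H p.1) * p.2 * sgn (H p.1) ∂D) -
        (∫ p, phi' (p.2 * H p.1) * p.2 * hstar p.1 ∂D) ≥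
      (∫ p, p.2 * hstar p.1 ∂D) - ∫ p, p.2 * sgn (H p.1) ∂D :=
  conservation_lemma_general
    (integrable_of_ae_eq_one_or_neg_one measurable_snd.aestronglyMeasurable hlab)
    hHmeas hstarmeas fun x => ((abs_eq zero_le_one).2 (hstarbin x)).le
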